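/- arXiv:2212.05152 — 2 statements merged into one kernel-verified Lean document; each statement's English description precedes it below -/
import Mathlib

section
/- Let X and Y be compact metric spaces and let S be a nonempty convex weak*-compact subset of P(X) × P(Y) that is a gambling house (for every x ∈ X there is σ with (δ_x,σ) ∈ S) and satisfies the fiber property: (μ,ν) ∈ S if and only if there exists a coupling π of μ and ν whose disintegration (π_x)_{x∈X} with respect to μ satisfies (δ_x, π_x) ∈ S for μ-almost every x. Then for every μ ∈ P(X) and every g ∈ C(Y): sup{ ∫_Y g dν : ν ∈ P(Y), (μ,ν) ∈ S } = ∫_X T g dμ, where Tg(x) := sup{ ∫_Y g dσ : (δ_x,σ) ∈ S }; in particular for every μ ∈ P(X) there exists ν ∈ P(Y) with (μ,ν) ∈ S. -/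
open MeasureTheory Topology Filter Set
open scoped ENNReal NNReal

noncomputable section

/-- The positive part of an extended real number, as an element of `ℝ≥0∞`. -/
def epos (a : EReal) : ℝ≥0∞ := if a = ⊤ then ⊤ else ENNReal.ofReal a.toReal

/-- Signed integral of an `EReal`-valued function (the natural value when `f` is
bounded above or bounded below). -/
def eint {α : Type*} [MeasurableSpace α] (μ : Measure α) (f : α → EReal) : EReal :=
  ((∫⁻ x, epos (f x) ∂μ : ℝ≥0∞) : EReal) - ((∫⁻ x, epos (-(f x)) ∂μ : ℝ≥0∞) : EReal)

/-- The Dirac measure at a point, as a probability measure. -/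
def diracP {α : Type*} [MeasurableSpace α] (x : α) : ProbabilityMeasure α :=
  ⟨Measure.dirac x, inferInstance⟩

/-- Convexity of a set of pairs of probability measures, via convex combinations
of the underlying measures. -/
def PConvex {X Y : Type*} [MeasurableSpace X] [MeasurableSpace Y]
    (C : Set (ProbabilityMeasure X × ProbabilityMeasure Y)) : Prop :=
  ∀ p ∈ C, ∀ q ∈ C, ∀ a b : ℝ≥0, a + b = 1 →
    ∀ (μ : ProbabilityMeasure X) (ν : ProbabilityMeasure Y),
      (μ : Measure X) = a • (p.1 : Measure X) + b • (q.1 : Measure X) →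
      (ν : Measure Y) = a • (p.2 : Measure Y) + b • (q.2 : Measure Y) →
      (μ, ν) ∈ C

/-- A gambling house: every Dirac measure has at least one target in `S`. -/
def IsGamblingHouse {X Y : Type*} [MeasurableSpace X] [MeasurableSpace Y]
    (S : Set (ProbabilityMeasure X × ProbabilityMeasure Y)) : Prop :=
  ∀ x : X, ∃ σ : ProbabilityMeasure Y, (diracP x, σ) ∈ S

/-- The (positively 1-homogeneous) Kantorovich operator of a gambling house:
`Tg(x) = sup { ∫ g dσ : (δ_x, σ) ∈ S }`. -/
def houseOp {X Y : Type*} [MeasurableSpace X] [TopologicalSpace Y] [MeasurableSpace Y]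
    (S : Set (ProbabilityMeasure X × ProbabilityMeasure Y)) (g : C(Y, ℝ)) (x : X) : EReal :=
  ⨆ σ ∈ {σ : ProbabilityMeasure Y | (diracP x, σ) ∈ S},
    (((∫ y, g y ∂(σ : Measure Y)) : ℝ) : EReal)

/-!
One inequality is immediate: disintegrating `ν` over `μ` and bounding `∫ g dπ_x` by `T g x` gives
`∫ g dν ≤ ∫ T g dμ`.

For the other, a measurable selection of maximizers is avoided by discretizing `μ`. Partition `X`
into countably many small Borel cells, and in each cell choose a pair `(z, σ)` with `(δ_z, σ) ∈ S`
for which `∫ g dσ` is within `ε` of its supremum over the cell. Moving the mass of each cell to `z`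
yields `μ'`, and the kernel constantly `σ` on the cell sends `μ'` to some `ν'` with
`∫ T g dμ - ε ≤ ∫ g dν'`; the fiber property puts `(μ', ν')` in `S`. As `ε → 0`, `μ'` tends to `μ`,
and compactness of `S` makes `{μ | ∃ ν, (μ, ν) ∈ S ∧ c ≤ ∫ g dν}` closed. Restricted to Dirac
measures, the same closedness gives the upper semicontinuity, hence measurability, of `T g`.
-/

open ProbabilityTheory

section Integration

variable {α β : Type*} [MeasurableSpace α] [MeasurableSpace β]

theorem epos_coe (r : ℝ) : epos (r : EReal) = ENNReal.ofReal r := by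
  simp [epos]

theorem eint_coe {μ : Measure α} {f : α → ℝ} (hf : Integrable f μ) :
    eint μ (fun x => (f x : EReal)) = ((∫ x, f x ∂μ : ℝ) : EReal) := by
  have h_pos : ∫⁻ x, ENNReal.ofReal (f x) ∂μ ≠ ⊤ := hf.lintegral_lt_top.ne
  have h_neg : ∫⁻ x, ENNReal.ofReal (-f x) ∂μ ≠ ⊤ := hf.neg.lintegral_lt_top.ne
  simp only [eint, ← EReal.coe_neg, epos_coe]
  rw [integral_eq_lintegral_pos_part_sub_lintegral_neg_part hf, EReal.coe_sub,
    EReal.coe_ennreal_toReal h_pos, EReal.coe_ennreal_toReal h_neg]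

variable {E : Type*} [NormedAddCommGroup E] [NormedSpace ℝ E]
  {μ : Measure α} {κ : Kernel α β} {f : β → E}

theorem integrable_integral_of_integrable_measure_comp (hf : Integrable f (κ ∘ₘ μ)) :
    Integrable (fun x => ∫ y, f y ∂κ x) μ := by
  rw [Measure.comp_eq_comp_const_apply] at hf
  simpa only [Kernel.const_apply] using hf.integral_comp

theorem integral_measure_comp (hf : Integrable f (κ ∘ₘ μ)) :
    ∫ y, f y ∂(κ ∘ₘ μ) = ∫ x, ∫ y, f y ∂κ x ∂μ := by
  rw [Measure.comp_eq_comp_const_apply] at hf ⊢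
  rw [Kernel.integral_comp hf, Kernel.const_apply]

end Integration

section Coupling

variable {X Y : Type*} [MeasurableSpace X] [MeasurableSpace Y]

theorem exists_coupling_disintegration_iff_eq_comp {μ : ProbabilityMeasure X}
    {ν : ProbabilityMeasure Y} {κ : Kernel X Y} [IsMarkovKernel κ] :
    (∃ π : ProbabilityMeasure (X × Y),
      (π : Measure (X × Y)).map Prod.fst = (μ : Measure X) ∧
      (π : Measure (X × Y)).map Prod.snd = (ν : Measure Y) ∧
      ∀ (A : Set X) (B : Set Y), MeasurableSet A → MeasurableSet B →
        (π : Measure (X × Y)) (A ×ˢ B) = ∫⁻ x in A, κ x B ∂(μ : Measure X)) ↔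
    (ν : Measure Y) = κ ∘ₘ (μ : Measure X) := by
  constructor
  · rintro ⟨π, -, hsnd, hπ⟩
    ext B hB
    rw [← hsnd, Measure.map_apply measurable_snd hB, Measure.bind_apply hB κ.aemeasurable,
      ← univ_prod, hπ univ B .univ hB, Measure.restrict_univ]
  · intro hν
    refine ⟨⟨(μ : Measure X) ⊗ₘ κ, inferInstance⟩, Measure.fst_compProd _ _, ?_,
      fun _ _ => Measure.compProd_apply_prod⟩
    rw [hν]
    exact Measure.snd_compProd _ _

/-- The fiber property of `S`: the pairs in `S` are those joined by a coupling whose disintegration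
kernel almost surely selects a pair `(δ_x, π_x)` of `S`. -/
def HasFiberProperty (S : Set (ProbabilityMeasure X × ProbabilityMeasure Y)) : Prop :=
  ∀ (μ : ProbabilityMeasure X) (ν : ProbabilityMeasure Y),
    (μ, ν) ∈ S ↔ ∃ (π : ProbabilityMeasure (X × Y)) (κ : X → ProbabilityMeasure Y),
      (π : Measure (X × Y)).map Prod.fst = (μ : Measure X) ∧
      (π : Measure (X × Y)).map Prod.snd = (ν : Measure Y) ∧
      Measurable (fun x => (κ x : Measure Y)) ∧
      (∀ (A : Set X) (B : Set Y), MeasurableSet A → MeasurableSet B →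
        (π : Measure (X × Y)) (A ×ˢ B) = ∫⁻ x in A, (κ x : Measure Y) B ∂(μ : Measure X)) ∧
      (∀ᵐ x ∂(μ : Measure X), (diracP x, κ x) ∈ S)

variable {S : Set (ProbabilityMeasure X × ProbabilityMeasure Y)}

theorem HasFiberProperty.mem_iff_exists_kernel (hS : HasFiberProperty S)
    {μ : ProbabilityMeasure X} {ν : ProbabilityMeasure Y} :
    (μ, ν) ∈ S ↔ ∃ (κ : Kernel X Y) (_ : IsMarkovKernel κ),
      (ν : Measure Y) = κ ∘ₘ (μ : Measure X) ∧
      ∀ᵐ x ∂(μ : Measure X), (diracP x, (⟨κ x, inferInstance⟩ : ProbabilityMeasure Y)) ∈ S := by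
  rw [hS μ ν]
  constructor
  · rintro ⟨π, κ, hfst, hsnd, hκ, hπ, hmem⟩
    let K : Kernel X Y := ⟨fun x => (κ x : Measure Y), hκ⟩
    have hK : IsMarkovKernel K := ⟨fun x => (κ x).2⟩
    exact ⟨K, hK, exists_coupling_disintegration_iff_eq_comp.1 ⟨π, hfst, hsnd, hπ⟩, hmem⟩
  · rintro ⟨κ, hκ, hν, hmem⟩
    obtain ⟨π, hfst, hsnd, hπ⟩ := exists_coupling_disintegration_iff_eq_comp.2 hν
    exact ⟨π, fun x => ⟨κ x, inferInstance⟩, hfst, hsnd, κ.measurable, hπ, hmem⟩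

end Coupling

section Discretization

theorem exists_measurable_nat_dist_le (X : Type*) [PseudoMetricSpace X]
    [TopologicalSpace.SeparableSpace X] [MeasurableSpace X] [OpensMeasurableSpace X]
    {ε : ℝ} (hε : 0 < ε) :
    ∃ s : X → ℕ, Measurable s ∧ ∀ x y, s x = s y → dist x y ≤ ε := by
  obtain ⟨A, hA_meas, hA_bdd, hA_diam, hA_cover, hA_disj⟩ :=
    SeparableSpace.exists_measurable_partition_diam_le X hε
  have hA_mem (x : X) : ∃ n, x ∈ A n := mem_iUnion.1 (hA_cover ▸ mem_univ x)
  choose s hs using hA_mem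
  have hs_preimage (n : ℕ) : s ⁻¹' {n} = A n := by
    ext x
    refine ⟨fun hx => hx ▸ hs x, fun hx => ?_⟩
    by_contra hne
    exact (disjoint_left.1 (hA_disj hne) (hs x)) hx
  refine ⟨s, measurable_to_nat fun x => hs_preimage (s x) ▸ hA_meas (s x), fun x y hxy => ?_⟩
  exact (Metric.dist_le_diam_of_mem (hA_bdd (s x)) (hs x) (hxy ▸ hs y)).trans (hA_diam (s x))

theorem exists_fiberwise_near_maximizer {α ι : Type*} [Nonempty α] {f : α → ℝ}
    (hf : BddAbove (range f)) (s : α → ι) {ε : ℝ} (hε : 0 < ε) :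
    ∃ φ : ι → α, ∀ a, s (φ (s a)) = s a ∧ f a - ε ≤ f (φ (s a)) := by
  suffices ∀ i, ∃ b, ∀ a, s a = i → s b = i ∧ f a - ε ≤ f b by
    choose φ hφ using this
    exact ⟨φ, fun a => hφ (s a) a rfl⟩
  intro i
  rcases (s ⁻¹' {i}).eq_empty_or_nonempty with h_empty | h_nonempty
  · exact ⟨Classical.arbitrary α, fun a ha => (h_empty.subset ha).elim⟩
  obtain ⟨_, ⟨b, hb, rfl⟩, hb_lt⟩ :=
    exists_lt_of_lt_csSup (h_nonempty.image f) (sub_lt_self (sSup (f '' (s ⁻¹' {i}))) hε)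
  refine ⟨b, fun a ha => ⟨hb, ?_⟩⟩
  have ha_le : f a ≤ sSup (f '' (s ⁻¹' {i})) :=
    le_csSup (hf.mono (image_subset_range _ _)) ⟨a, ha, rfl⟩
  linarith

end Discretization

theorem tendsto_probabilityMeasure_map_of_ae_tendsto {X ι : Type*} [TopologicalSpace X]
    [MeasurableSpace X] [OpensMeasurableSpace X] {l : Filter ι} [l.IsCountablyGenerated]
    {μ : ProbabilityMeasure X} {r : ι → X → X} (hr : ∀ i, AEMeasurable (r i) (μ : Measure X))
    (h_lim : ∀ᵐ x ∂(μ : Measure X), Tendsto (fun i => r i x) l (𝓝 x)) :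
    Tendsto (fun i => μ.map (hr i)) l (𝓝 μ) := by
  have h_tendsto : Tendsto (fun i => μ.map (hr i)) l (𝓝 (μ.map aemeasurable_id)) :=
    (tendstoInDistribution_of_ae_tendsto hr aemeasurable_id h_lim).tendsto
  have h_id : μ.map aemeasurable_id = μ := Subtype.ext Measure.map_id
  rwa [h_id] at h_tendsto

section CompactSpace

variable {Y : Type*} [TopologicalSpace Y] [CompactSpace Y] [MeasurableSpace Y]
  [OpensMeasurableSpace Y]

theorem integrable_continuousMap (g : C(Y, ℝ)) (ν : Measure Y) [IsFiniteMeasure ν] :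
    Integrable g ν :=
  (BoundedContinuousFunction.mkOfCompact g).integrable ν

theorem abs_integral_continuousMap_le (g : C(Y, ℝ)) (ν : ProbabilityMeasure Y) :
    |∫ y, g y ∂(ν : Measure Y)| ≤ ‖g‖ := by
  simpa using (BoundedContinuousFunction.mkOfCompact g).norm_integral_le_norm (ν : Measure Y)

variable {X : Type*} [MeasurableSpace X] {S : Set (ProbabilityMeasure X × ProbabilityMeasure Y)}
  {g : C(Y, ℝ)} {x : X} {σ : ProbabilityMeasure Y}

theorem coe_toReal_houseOp (hσ : (diracP x, σ) ∈ S) :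
    ((houseOp S g x).toReal : EReal) = houseOp S g x := by
  refine EReal.coe_toReal (ne_top_of_le_ne_top (EReal.coe_ne_top ‖g‖) ?_)
    (ne_bot_of_le_ne_bot (EReal.coe_ne_bot _) (le_iSup₂_of_le σ hσ le_rfl))
  exact iSup₂_le fun τ _ => EReal.coe_le_coe_iff.2 (abs_le.1 (abs_integral_continuousMap_le g τ)).2

theorem integral_le_toReal_houseOp (hσ : (diracP x, σ) ∈ S) :
    ∫ y, g y ∂(σ : Measure Y) ≤ (houseOp S g x).toReal := by
  rw [← EReal.coe_le_coe_iff, coe_toReal_houseOp hσ]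
  exact le_iSup₂_of_le σ hσ le_rfl

theorem toReal_houseOp_le (hσ : (diracP x, σ) ∈ S) {c : ℝ}
    (hc : ∀ τ, (diracP x, τ) ∈ S → ∫ y, g y ∂(τ : Measure Y) ≤ c) :
    (houseOp S g x).toReal ≤ c := by
  rw [← EReal.coe_le_coe_iff, coe_toReal_houseOp hσ]
  exact iSup₂_le fun τ hτ => EReal.coe_le_coe_iff.2 (hc τ hτ)

theorem abs_toReal_houseOp_le (hσ : (diracP x, σ) ∈ S) : |(houseOp S g x).toReal| ≤ ‖g‖ :=
  abs_le.2 ⟨(abs_le.1 (abs_integral_continuousMap_le g σ)).1.trans (integral_le_toReal_houseOp hσ),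
    toReal_houseOp_le hσ fun τ _ => (abs_le.1 (abs_integral_continuousMap_le g τ)).2⟩

end CompactSpace

section Semicontinuity

theorem isClosed_setOf_exists_le_of_isCompact {A B γ : Type*} [TopologicalSpace A] [T2Space A]
    [TopologicalSpace B] [TopologicalSpace γ] [Preorder γ] [ClosedIciTopology γ] {S : Set (A × B)}
    (hS : IsCompact S) {f : B → γ} (hf : Continuous f) (c : γ) :
    IsClosed {a | ∃ b, (a, b) ∈ S ∧ c ≤ f b} := by
  have hK : IsCompact (S ∩ (f ∘ Prod.snd) ⁻¹' Ici c) :=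
    hS.inter_right (isClosed_Ici.preimage (hf.comp continuous_snd))
  convert! (hK.image continuous_fst).isClosed
  ext a
  simp

variable {X Y : Type*} [TopologicalSpace X] [HasOuterApproxClosed X] [MeasurableSpace X]
  [BorelSpace X] [TopologicalSpace Y] [CompactSpace Y] [MeasurableSpace Y] [OpensMeasurableSpace Y]
  {S : Set (ProbabilityMeasure X × ProbabilityMeasure Y)}

theorem isClosed_setOf_exists_le_integral (hS : IsCompact S) (g : C(Y, ℝ)) (c : ℝ) :
    IsClosed {μ | ∃ ν, (μ, ν) ∈ S ∧ c ≤ ∫ y, g y ∂(ν : Measure Y)} :=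
  isClosed_setOf_exists_le_of_isCompact hS
    (ProbabilityMeasure.continuous_integral_continuousMap g) c

theorem upperSemicontinuous_houseOp (hS : IsCompact S) (g : C(Y, ℝ)) :
    UpperSemicontinuous (houseOp S g) := by
  intro x c hc
  obtain ⟨b, hb, hbc⟩ := EReal.lt_iff_exists_real_btwn.1 hc
  have h_closed : IsClosed {x | ∃ σ, (diracP x, σ) ∈ S ∧ b ≤ ∫ y, g y ∂(σ : Measure Y)} :=
    (isClosed_setOf_exists_le_integral hS g b).preimage continuous_diracProba
  have hx : x ∉ {x | ∃ σ, (diracP x, σ) ∈ S ∧ b ≤ ∫ y, g y ∂(σ : Measure Y)} := by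
    rintro ⟨σ, hσ, hbσ⟩
    exact hb.not_ge (le_iSup₂_of_le σ hσ (EReal.coe_le_coe_iff.2 hbσ))
  filter_upwards [h_closed.isOpen_compl.mem_nhds hx] with z hz
  refine (iSup₂_le fun σ hσ => EReal.coe_le_coe_iff.2 ?_).trans_lt hbc
  exact (not_le.1 fun hbσ => hz ⟨σ, hσ, hbσ⟩).le

theorem integrable_toReal_houseOp (hS : IsCompact S) (hhouse : IsGamblingHouse S) (g : C(Y, ℝ))
    (μ : Measure X) [IsFiniteMeasure μ] : Integrable (fun x => (houseOp S g x).toReal) μ := by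
  refine .of_bound (upperSemicontinuous_houseOp hS g).measurable.ereal_toReal.aestronglyMeasurable
    ‖g‖ (Eventually.of_forall fun x => ?_)
  obtain ⟨σ, hσ⟩ := hhouse x
  exact abs_toReal_houseOp_le hσ

theorem integral_le_integral_toReal_houseOp (hS : IsCompact S) (hhouse : IsGamblingHouse S)
    (hfiber : HasFiberProperty S) (g : C(Y, ℝ)) {μ : ProbabilityMeasure X}
    {ν : ProbabilityMeasure Y} (hν : (μ, ν) ∈ S) :
    ∫ y, g y ∂(ν : Measure Y) ≤ ∫ x, (houseOp S g x).toReal ∂(μ : Measure X) := by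
  obtain ⟨κ, _, hνκ, hmem⟩ := hfiber.mem_iff_exists_kernel.1 hν
  have hg : Integrable g (κ ∘ₘ (μ : Measure X)) := integrable_continuousMap g _
  rw [hνκ, integral_measure_comp hg]
  exact integral_mono_ae (integrable_integral_of_integrable_measure_comp hg)
    (integrable_toReal_houseOp hS hhouse g μ) (hmem.mono fun x hx => integral_le_toReal_houseOp hx)

end Semicontinuity

section Approximation

theorem HasFiberProperty.exists_mem_map {X Y ι : Type*} [MeasurableSpace X]
    [MeasurableSingletonClass X] [MeasurableSpace Y] [Countable ι] [MeasurableSpace ι]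
    [DiscreteMeasurableSpace ι] {S : Set (ProbabilityMeasure X × ProbabilityMeasure Y)}
    (hfiber : HasFiberProperty S) (μ : ProbabilityMeasure X) {s : X → ι} (hs : Measurable s)
    {z : ι → X} (hzs : ∀ x, s (z (s x)) = s x) {σ : ι → ProbabilityMeasure Y}
    (hσ : ∀ i, (diracP (z i), σ i) ∈ S) :
    ∃ ν : ProbabilityMeasure Y,
      (μ.map ((Measurable.of_discrete (f := z)).comp hs).aemeasurable, ν) ∈ S ∧
      ∀ g : Y → ℝ, Integrable g (ν : Measure Y) →
        ∫ y, g y ∂(ν : Measure Y) = ∫ x, ∫ y, g y ∂(σ (s x) : Measure Y) ∂(μ : Measure X) := by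
  have hr : Measurable (z ∘ s) := Measurable.of_discrete.comp hs
  let κ : Kernel X Y := ⟨fun x => (σ (s x) : Measure Y),
    (Measurable.of_discrete (f := fun i => (σ i : Measure Y))).comp hs⟩
  have hκ : IsMarkovKernel κ := ⟨fun x => (σ (s x)).2⟩
  have h_comp : κ ∘ₘ (μ : Measure X).map (z ∘ s) = κ ∘ₘ (μ : Measure X) := by
    ext B hB
    rw [Measure.bind_apply hB κ.aemeasurable, Measure.bind_apply hB κ.aemeasurable,
      lintegral_map (κ.measurable_coe hB) hr]
    simp only [κ, Kernel.coe_mk, Function.comp_apply, hzs]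
  refine ⟨⟨κ ∘ₘ (μ : Measure X), inferInstance⟩,
    hfiber.mem_iff_exists_kernel.2 ⟨κ, hκ, h_comp.symm, ?_⟩, fun g hg => integral_measure_comp hg⟩
  have h_range : MeasurableSet (range (z ∘ s)) :=
    ((countable_range z).mono (range_comp_subset_range s z)).measurableSet
  filter_upwards [ae_map_mem_range (z ∘ s) h_range (μ : Measure X)] with x hx
  obtain ⟨w, rfl⟩ := hx
  convert! hσ (s w) using 2
  simp only [κ, Kernel.coe_mk, Function.comp_apply, hzs]
  rfl

variable {X Y : Type*} [MetricSpace X] [TopologicalSpace.SeparableSpace X] [MeasurableSpace X]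
  [BorelSpace X] [TopologicalSpace Y] [CompactSpace Y] [MeasurableSpace Y] [OpensMeasurableSpace Y]
  {S : Set (ProbabilityMeasure X × ProbabilityMeasure Y)}

theorem exists_near_identity_map_mem (hS : IsCompact S) (hhouse : IsGamblingHouse S)
    (hfiber : HasFiberProperty S) (μ : ProbabilityMeasure X) (g : C(Y, ℝ)) {ε : ℝ} (hε : 0 < ε) :
    ∃ (r : X → X) (hr : Measurable r), (∀ x, dist (r x) x ≤ ε) ∧
      ∃ ν, (μ.map hr.aemeasurable, ν) ∈ S ∧
        ∫ x, (houseOp S g x).toReal ∂(μ : Measure X) - ε ≤ ∫ y, g y ∂(ν : Measure Y) := by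
  let P := {p : X × ProbabilityMeasure Y // (diracP p.1, p.2) ∈ S}
  have : Nonempty P := by
    obtain ⟨x⟩ := μ.nonempty
    obtain ⟨σ, hσ⟩ := hhouse x
    exact ⟨(x, σ), hσ⟩
  have h_bdd : BddAbove (range fun p : P => ∫ y, g y ∂(p.1.2 : Measure Y)) :=
    ⟨‖g‖, forall_mem_range.2 fun p => (abs_le.1 (abs_integral_continuousMap_le g p.1.2)).2⟩
  obtain ⟨s, hs, hs_dist⟩ := exists_measurable_nat_dist_le X hε
  obtain ⟨φ, hφ⟩ := exists_fiberwise_near_maximizer h_bdd (fun p : P => s p.1.1) hε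
  have hzs (x : X) : s (φ (s x)).1.1 = s x := by
    obtain ⟨σ, hσ⟩ := hhouse x
    exact (hφ ⟨(x, σ), hσ⟩).1
  have h_near (x : X) :
      (houseOp S g x).toReal - ε ≤ ∫ y, g y ∂((φ (s x)).1.2 : Measure Y) := by
    obtain ⟨σ, hσ⟩ := hhouse x
    rw [sub_le_iff_le_add]
    exact toReal_houseOp_le hσ fun τ hτ => sub_le_iff_le_add.1 (hφ ⟨(x, τ), hτ⟩).2
  obtain ⟨ν, hν, hν_integral⟩ := hfiber.exists_mem_map μ hs (z := fun n => (φ n).1.1) hzs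
    (σ := fun n => (φ n).1.2) fun n => (φ n).2
  refine ⟨_, (Measurable.of_discrete (f := fun n => (φ n).1.1)).comp hs,
    fun x => hs_dist (φ (s x)).1.1 x (hzs x), ν, hν, ?_⟩
  have hT := integrable_toReal_houseOp hS hhouse g (μ : Measure X)
  have h_step : Integrable (fun x => ∫ y, g y ∂((φ (s x)).1.2 : Measure Y)) (μ : Measure X) :=
    .of_bound ((Measurable.of_discrete
      (f := fun n => ∫ y, g y ∂((φ n).1.2 : Measure Y))).comp hs).aestronglyMeasurable
      ‖g‖ (Eventually.of_forall fun x => abs_integral_continuousMap_le g _)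
  calc ∫ x, (houseOp S g x).toReal ∂(μ : Measure X) - ε
      = ∫ x, ((houseOp S g x).toReal - ε) ∂(μ : Measure X) := by
        rw [integral_sub hT (integrable_const ε), integral_const, probReal_univ, one_smul]
    _ ≤ ∫ x, ∫ y, g y ∂((φ (s x)).1.2 : Measure Y) ∂(μ : Measure X) :=
        integral_mono (hT.sub (integrable_const ε)) h_step h_near
    _ = ∫ y, g y ∂(ν : Measure Y) := (hν_integral g (integrable_continuousMap g _)).symm

theorem exists_mem_le_integral_of_lt (hS : IsCompact S) (hhouse : IsGamblingHouse S)
    (hfiber : HasFiberProperty S) (μ : ProbabilityMeasure X) (g : C(Y, ℝ)) {c : ℝ}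
    (hc : c < ∫ x, (houseOp S g x).toReal ∂(μ : Measure X)) :
    ∃ ν, (μ, ν) ∈ S ∧ c ≤ ∫ y, g y ∂(ν : Measure Y) := by
  have h_zero : Tendsto (fun n : ℕ => 1 / ((n : ℝ) + 1)) atTop (𝓝 0) :=
    tendsto_one_div_add_atTop_nhds_zero_nat
  choose r hr hr_dist ν hν hν_integral using fun n : ℕ =>
    exists_near_identity_map_mem hS hhouse hfiber μ g (Nat.one_div_pos_of_nat (α := ℝ) (n := n))
  have h_lim (x : X) : Tendsto (fun n => r n x) atTop (𝓝 x) :=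
    tendsto_iff_dist_tendsto_zero.2
      (squeeze_zero (fun _ => dist_nonneg) (fun n => hr_dist n x) h_zero)
  have h_map : Tendsto (fun n => μ.map (hr n).aemeasurable) atTop (𝓝 μ) :=
    tendsto_probabilityMeasure_map_of_ae_tendsto (fun n => (hr n).aemeasurable)
      (Eventually.of_forall h_lim)
  refine (isClosed_setOf_exists_le_integral hS g c).mem_of_tendsto h_map ?_
  filter_upwards [h_zero.eventually_lt_const (sub_pos.2 hc)] with n hn
  exact ⟨ν n, hν n, by linarith [hν_integral n]⟩

end Approximation

theorem houseOp_legendre_of_fiber_general {X Y : Type*} [MetricSpace X]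
    [TopologicalSpace.SeparableSpace X] [MeasurableSpace X] [BorelSpace X]
    [TopologicalSpace Y] [CompactSpace Y] [MeasurableSpace Y] [OpensMeasurableSpace Y]
    {S : Set (ProbabilityMeasure X × ProbabilityMeasure Y)} (hcomp : IsCompact S)
    (hhouse : IsGamblingHouse S) (hfiber : HasFiberProperty S) :
    (∀ (μ : ProbabilityMeasure X) (g : C(Y, ℝ)),
      (⨆ ν ∈ {ν : ProbabilityMeasure Y | (μ, ν) ∈ S},
          (((∫ y, g y ∂(ν : Measure Y)) : ℝ) : EReal))
        = eint (μ : Measure X) (houseOp S g)) ∧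
    (∀ μ : ProbabilityMeasure X, ∃ ν : ProbabilityMeasure Y, (μ, ν) ∈ S) := by
  refine ⟨fun μ g => ?_, fun μ => ?_⟩
  · have h_coe : houseOp S g = fun x => ((houseOp S g x).toReal : EReal) :=
      funext fun x => (coe_toReal_houseOp (hhouse x).choose_spec).symm
    rw [h_coe, eint_coe (integrable_toReal_houseOp hcomp hhouse g μ)]
    refine le_antisymm (iSup₂_le fun ν hν => EReal.coe_le_coe_iff.2 <|
      integral_le_integral_toReal_houseOp hcomp hhouse hfiber g hν) ?_
    refine EReal.ge_of_forall_gt_iff_ge.1 fun c hc => ?_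
    obtain ⟨ν, hν, hcν⟩ :=
      exists_mem_le_integral_of_lt hcomp hhouse hfiber μ g (EReal.coe_lt_coe_iff.1 hc)
    exact le_iSup₂_of_le ν hν (EReal.coe_le_coe_iff.2 hcν)
  · obtain ⟨ν, hν, -⟩ := exists_mem_le_integral_of_lt hcomp hhouse hfiber μ 0 (sub_one_lt _)
    exact ⟨ν, hν⟩

/-- For a convex weak*-compact gambling house with the disintegration (fiber)
property, the Legendre transform of its characteristic transfer at any `μ` is
`∫ T g dμ`; in particular every `μ` admits a target in `S`. -/
theorem houseOp_legendre_of_fiber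
    {X Y : Type*} [MetricSpace X] [CompactSpace X] [MeasurableSpace X] [BorelSpace X]
    [MetricSpace Y] [CompactSpace Y] [MeasurableSpace Y] [BorelSpace Y]
    (S : Set (ProbabilityMeasure X × ProbabilityMeasure Y))
    (hne : S.Nonempty) (hconv : PConvex S) (hcomp : IsCompact S)
    (hhouse : IsGamblingHouse S)
    (hfiber : ∀ (μ : ProbabilityMeasure X) (ν : ProbabilityMeasure Y),
      (μ, ν) ∈ S ↔ ∃ (π : ProbabilityMeasure (X × Y)) (κ : X → ProbabilityMeasure Y),
        (π : Measure (X × Y)).map Prod.fst = (μ : Measure X) ∧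
        (π : Measure (X × Y)).map Prod.snd = (ν : Measure Y) ∧
        Measurable (fun x => (κ x : Measure Y)) ∧
        (∀ (A : Set X) (B : Set Y), MeasurableSet A → MeasurableSet B →
          (π : Measure (X × Y)) (A ×ˢ B) = ∫⁻ x in A, (κ x : Measure Y) B ∂(μ : Measure X)) ∧
        (∀ᵐ x ∂(μ : Measure X), (diracP x, κ x) ∈ S)) :
    (∀ (μ : ProbabilityMeasure X) (g : C(Y, ℝ)),
      (⨆ ν ∈ {ν : ProbabilityMeasure Y | (μ, ν) ∈ S},
          (((∫ y, g y ∂(ν : Measure Y)) : ℝ) : EReal))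
        = eint (μ : Measure X) (houseOp S g)) ∧
    (∀ μ : ProbabilityMeasure X, ∃ ν : ProbabilityMeasure Y, (μ, ν) ∈ S) :=
  houseOp_legendre_of_fiber_general hcomp hhouse hfiber
end
end

section
/- Let X and Y be compact metric spaces and let 𝒯 be a standard backward linear transfer on P(X) × P(Y) with 𝒯 ≥ 0 and Kantorovich operator T. For g ∈ C(Y) and x ∈ X, the function λ ↦ T(λg)(x)/λ is monotone nondecreasing on (0,∞), so the recession operator T_r g(x) := lim_{λ→∞} T(λg)(x)/λ exists in [−∞,∞]. Then: (a) for every μ ∈ P(X) such that 𝒯(μ,ν₀) < +∞ for some ν₀, and every g ∈ C(Y), sup{ ∫_Y g dν : ν ∈ P(Y), 𝒯(μ,ν) < +∞ } = ∫_X T_r g dμ; (b) D(𝒯) := {(μ,ν) : 𝒯(μ,ν) < +∞} is contained in D(𝒯_r) := { (μ,ν) : ∫_Y g dν ≤ ∫_X T_r g dμ for all g ∈ C(Y) }; (c) D(𝒯_r) is the smallest backward transfer set containing D(𝒯): if S is any convex weak*-compact gambling house S ⊆ P(X) × P(Y) with D(𝒯) ⊆ S and S = { (μ,ν) : ∫_Y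 g dν ≤ ∫_X T_S g dμ for all g ∈ C(Y) }, where T_S g(x) := sup{ ∫_Y g dσ : (δ_x,σ) ∈ S }, then D(𝒯_r) ⊆ S. -/
open MeasureTheory Topology Filter Set
open scoped ENNReal NNReal

noncomputable section

/-- The backward Kantorovich operator of a transfer functional `𝒯`, on continuous
functions: `T⁻g(x) = sup_{σ ∈ P(Y)} { ∫ g dσ − 𝒯(δ_x, σ) }`. -/
def TopC {X Y : Type*} [MeasurableSpace X] [TopologicalSpace Y] [MeasurableSpace Y]
    (𝒯 : ProbabilityMeasure X → ProbabilityMeasure Y → EReal)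
    (g : C(Y, ℝ)) (x : X) : EReal :=
  ⨆ σ : ProbabilityMeasure Y, (((∫ y, g y ∂(σ : Measure Y)) : ℝ) : EReal) - 𝒯 (diracP x) σ

/-- The backward Kantorovich operator of a transfer functional `𝒯`, extended to
extended-real-valued functions. -/
def TopU {X Y : Type*} [MeasurableSpace X] [MeasurableSpace Y]
    (𝒯 : ProbabilityMeasure X → ProbabilityMeasure Y → EReal)
    (g : Y → EReal) (x : X) : EReal :=
  ⨆ σ : ProbabilityMeasure Y, eint (σ : Measure Y) g - 𝒯 (diracP x) σ

/-- A backward linear transfer: a proper, bounded below, jointly convex,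
weak*-lower semicontinuous functional on `P(X) × P(Y)` with values in `ℝ ∪ {+∞}`,
such that the Legendre transform of each partial map `𝒯(μ,·)` is given by
integrating the backward Kantorovich operator against `μ`. -/
def IsBLT {X Y : Type*} [TopologicalSpace X] [MeasurableSpace X] [OpensMeasurableSpace X]
    [TopologicalSpace Y] [MeasurableSpace Y] [OpensMeasurableSpace Y]
    (𝒯 : ProbabilityMeasure X → ProbabilityMeasure Y → EReal) : Prop :=
  (∀ μ ν, 𝒯 μ ν ≠ ⊥) ∧
  (∃ μ ν, 𝒯 μ ν ≠ ⊤) ∧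
  (∃ m : ℝ, ∀ μ ν, (m : EReal) ≤ 𝒯 μ ν) ∧
  (∀ (μ₁ μ₂ : ProbabilityMeasure X) (ν₁ ν₂ : ProbabilityMeasure Y)
      (μ : ProbabilityMeasure X) (ν : ProbabilityMeasure Y) (a b : ℝ≥0),
      a + b = 1 →
      (μ : Measure X) = a • (μ₁ : Measure X) + b • (μ₂ : Measure X) →
      (ν : Measure Y) = a • (ν₁ : Measure Y) + b • (ν₂ : Measure Y) →
      𝒯 μ ν ≤ ((a : ℝ) : EReal) * 𝒯 μ₁ ν₁ + ((b : ℝ) : EReal) * 𝒯 μ₂ ν₂) ∧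
  LowerSemicontinuous (fun p : ProbabilityMeasure X × ProbabilityMeasure Y => 𝒯 p.1 p.2) ∧
  (∀ (μ : ProbabilityMeasure X) (g : C(Y, ℝ)),
      (⨆ σ : ProbabilityMeasure Y,
        (((∫ y, g y ∂(σ : Measure Y)) : ℝ) : EReal) - 𝒯 μ σ)
        = eint (μ : Measure X) (TopC 𝒯 g))

/-- A transfer is standard if every Dirac measure admits a finite-cost target. -/
def IsStandardT {X Y : Type*} [MeasurableSpace X] [MeasurableSpace Y]
    (𝒯 : ProbabilityMeasure X → ProbabilityMeasure Y → EReal) : Prop :=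
  ∀ x : X, ∃ σ : ProbabilityMeasure Y, 𝒯 (diracP x) σ ≠ ⊤

/-- The recession operator `T_r g(x) = lim_{λ→∞} T(λg)(x)/λ` of the Kantorovich
operator of a (nonnegative) transfer, realised as a monotone supremum. -/
def Trec {X Y : Type*} [MeasurableSpace X] [TopologicalSpace Y] [MeasurableSpace Y]
    (𝒯 : ProbabilityMeasure X → ProbabilityMeasure Y → EReal)
    (g : C(Y, ℝ)) (x : X) : EReal :=
  ⨆ l : {l : ℝ // 0 < l}, (((1 / (l : ℝ)) : ℝ) : EReal) * TopC 𝒯 ((l : ℝ) • g) x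

/-!
For a cost `C ≥ 0` with Legendre transform `C*`, one has `C*(l g) / l = sup_ν (∫ g dν - C(ν) / l)`,
which increases with `l` to the support function of `{C ≠ ⊤}`, because `C(ν) / l` decreases to `0`
or stays `⊤`. For `C = 𝒯(δ_x, ·)` this shows that `T_r` is the Kantorovich operator of the gambling
house `D(𝒯)`, so `D(𝒯_r) ⊆ S` follows from `D(𝒯) ⊆ S`. For `C = 𝒯(μ, ·)` the duality
`C* = ∫ T dμ` and monotone convergence give the integral formula.
-/

section SignedIntegral

theorem epos_eq_toENNReal : epos = EReal.toENNReal := rfl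

theorem monotone_epos : Monotone epos := fun _ _ => EReal.toENNReal_le_toENNReal

theorem continuous_epos : Continuous epos := EReal.continuous_toENNReal

variable {α : Type*} [MeasurableSpace α] {μ : Measure α}

theorem eint_mono {f g : α → EReal} (h : f ≤ g) : eint μ f ≤ eint μ g :=
  EReal.sub_le_sub
    (EReal.coe_ennreal_le_coe_ennreal_iff.2 (lintegral_mono fun x => monotone_epos (h x)))
    (EReal.coe_ennreal_le_coe_ennreal_iff.2
      (lintegral_mono fun x => monotone_epos (EReal.neg_le_neg_iff.2 (h x))))

theorem eint_const_mul {c : ℝ} (hc : 0 ≤ c) (f : α → EReal) :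
    eint μ (fun x => (c : EReal) * f x) = (c : EReal) * eint μ f := by
  have hc' : (0 : EReal) ≤ c := EReal.coe_nonneg.2 hc
  have hc_top : (c : EReal).toENNReal ≠ ⊤ := EReal.toENNReal_ne_top_iff.2 (EReal.coe_ne_top c)
  simp only [eint, epos_eq_toENNReal, ← mul_neg, EReal.toENNReal_mul hc']
  rw [lintegral_const_mul' _ _ hc_top, lintegral_const_mul' _ _ hc_top,
    EReal.mul_sub_of_nonneg_of_ne_top hc' (EReal.coe_ne_top c), EReal.coe_ennreal_mul,
    EReal.coe_ennreal_mul, EReal.coe_toENNReal hc']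

theorem lintegral_epos_neg_ne_top {f : α → EReal} (hf : eint μ f ≠ ⊥) :
    ∫⁻ x, epos (-f x) ∂μ ≠ ⊤ :=
  fun h => hf (by simp [eint, h])

theorem tendsto_eint_of_monotone {f : ℕ → α → EReal} {F : α → EReal}
    (hf : ∀ n, AEMeasurable (f n) μ) (hmono : Monotone f) (h₀ : eint μ (f 0) ≠ ⊥)
    (hlim : ∀ x, Tendsto (fun n => f n x) atTop (𝓝 (F x))) :
    Tendsto (fun n => eint μ (f n)) atTop (𝓝 (eint μ F)) := by
  have hpos : Tendsto (fun n => ∫⁻ x, epos (f n x) ∂μ) atTop (𝓝 (∫⁻ x, epos (F x) ∂μ)) :=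
    lintegral_tendsto_of_tendsto_of_monotone
      (fun n => continuous_epos.measurable.comp_aemeasurable (hf n))
      (ae_of_all _ fun x _ _ hmn => monotone_epos (hmono hmn x))
      (ae_of_all _ fun x => (continuous_epos.tendsto _).comp (hlim x))
  have hneg : Tendsto (fun n => ∫⁻ x, epos (-f n x) ∂μ) atTop (𝓝 (∫⁻ x, epos (-F x) ∂μ)) :=
    lintegral_tendsto_of_tendsto_of_antitone
      (fun n => continuous_epos.measurable.comp_aemeasurable (hf n).neg)
      (ae_of_all _ fun x _ _ hmn => monotone_epos (EReal.neg_le_neg_iff.2 (hmono hmn x)))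
      (lintegral_epos_neg_ne_top h₀)
      (ae_of_all _ fun x => (continuous_epos.tendsto _).comp (hlim x).neg)
  have hF : ∫⁻ x, epos (-F x) ∂μ ≠ ⊤ := by
    refine ne_top_of_le_ne_top (lintegral_epos_neg_ne_top h₀) (lintegral_mono fun x => ?_)
    have hle : f 0 x ≤ F x :=
      ge_of_tendsto' (hlim x) fun n => hmono (Nat.zero_le n) x
    exact monotone_epos (EReal.neg_le_neg_iff.2 hle)
  exact (EReal.continuousAt_add (Or.inr (by simpa using hF)) (Or.inl (by simp))).tendsto.comp
    (((continuous_coe_ennreal_ereal.tendsto _).comp hpos).prodMk_nhds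
      ((continuous_coe_ennreal_ereal.tendsto _).comp hneg).neg)

theorem eint_iSup {ι : Type*} [Preorder ι] [IsDirectedOrder ι]
    [(atTop : Filter ι).IsCountablyGenerated] {f : ι → α → EReal}
    (hf : ∀ i, AEMeasurable (f i) μ) (hmono : Monotone f) (hbot : ∃ i, eint μ (f i) ≠ ⊥) :
    eint μ (fun x => ⨆ i, f i x) = ⨆ i, eint μ (f i) := by
  obtain ⟨i, hi⟩ := hbot
  have : Nonempty ι := ⟨i⟩
  obtain ⟨u, hu_mono, hu_lim⟩ := exists_seq_monotone_tendsto_atTop_atTop ι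
  obtain ⟨N, hN⟩ := (hu_lim.eventually_ge_atTop i).exists
  set v : ℕ → ι := fun n => u (n + N)
  have hv_mono : Monotone v := fun _ _ hmn => hu_mono (Nat.add_le_add_right hmn N)
  have hv_lim : Tendsto v atTop atTop := hu_lim.comp (tendsto_add_atTop_nat N)
  have hv₀ : eint μ (f (v 0)) ≠ ⊥ :=
    ne_bot_of_le_ne_bot hi (eint_mono (hmono (by simpa [v] using hN)))
  exact tendsto_nhds_unique
    (tendsto_eint_of_monotone (fun n => hf (v n)) (hmono.comp hv_mono) hv₀ fun x =>
      (tendsto_atTop_iSup fun _ _ hij => hmono hij x).comp hv_lim)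
    ((tendsto_atTop_iSup fun _ _ hij => eint_mono (hmono hij)).comp hv_lim)

end SignedIntegral

section ExtendedReal

theorem coe_mul_iSup_of_pos {ι : Sort*} {c : ℝ} (hc : 0 < c) (f : ι → EReal) :
    (c : EReal) * ⨆ i, f i = ⨆ i, (c : EReal) * f i := by
  have hgc : GaloisConnection ((c : EReal) * ·) (· / (c : EReal)) := fun a b => by
    simp only [EReal.le_div_iff_mul_le (EReal.coe_pos.2 hc) (EReal.coe_ne_top c), mul_comm]
  exact hgc.l_iSup

theorem monotoneOn_coe_sub_one_div_mul (a : ℝ) {c : EReal} (hc : 0 ≤ c) :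
    MonotoneOn (fun l : ℝ => (a : EReal) - ((1 / l : ℝ) : EReal) * c) (Ioi 0) :=
  fun _ hl _ _ hlm => EReal.sub_le_sub le_rfl <|
    mul_le_mul_of_nonneg_right (EReal.coe_le_coe_iff.2 (one_div_le_one_div_of_le hl hlm)) hc

theorem iSup_coe_sub_one_div_mul (a : ℝ) {c : EReal} (hc : 0 ≤ c) :
    ⨆ l : {l : ℝ // 0 < l}, (a : EReal) - ((1 / (l : ℝ) : ℝ) : EReal) * c =
      ⨆ _ : c ≠ ⊤, (a : EReal) := by
  have hnonneg (l : {l : ℝ // 0 < l}) : (0 : EReal) ≤ ((1 / (l : ℝ) : ℝ) : EReal) :=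
    EReal.coe_nonneg.2 (one_div_pos.2 l.2).le
  induction c with
  | bot => simp at hc
  | top =>
    have htop (l : {l : ℝ // 0 < l}) : ((1 / (l : ℝ) : ℝ) : EReal) * ⊤ = ⊤ :=
      EReal.coe_mul_top_of_pos (one_div_pos.2 l.2)
    simp only [htop, EReal.sub_top, iSup_bot, ne_eq, not_true_eq_false, iSup_of_empty]
  | coe r =>
    rw [iSup_pos (EReal.coe_ne_top r)]
    refine le_antisymm (iSup_le fun l => ?_) ?_
    · exact (EReal.sub_le_sub le_rfl (mul_nonneg (hnonneg l) hc)).trans_eq (sub_zero _)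
    · have hlim : Tendsto (fun n : ℕ => ((a - 1 / ((n : ℝ) + 1) * r : ℝ) : EReal)) atTop
          (𝓝 (a : EReal)) := by
        refine EReal.tendsto_coe.2 ?_
        simpa using (tendsto_one_div_add_atTop_nhds_zero_nat.mul_const r).const_sub a
      exact le_of_tendsto' hlim fun n => le_iSup
        (fun l : {l : ℝ // 0 < l} => (a : EReal) - ((1 / (l : ℝ) : ℝ) : EReal) * r)
        ⟨(n : ℝ) + 1, by positivity⟩

end ExtendedReal

theorem upperSemicontinuous_iSup_of_compactSpace {α β γ : Type*} [TopologicalSpace α]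
    [TopologicalSpace β] [CompactSpace β] [CompleteLinearOrder γ] {F : α × β → γ}
    (hF : UpperSemicontinuous F) : UpperSemicontinuous fun x => ⨆ y, F (x, y) := by
  rcases isEmpty_or_nonempty β with hβ | hβ
  · simp only [iSup_of_empty, upperSemicontinuous_const]
  refine upperSemicontinuous_iff_isClosed_preimage.2 fun a => ?_
  have hpreimage : (fun x => ⨆ y, F (x, y)) ⁻¹' Ici a = Prod.fst '' (F ⁻¹' Ici a) := by
    ext x
    constructor
    · intro hx
      obtain ⟨y, -, hy⟩ := UpperSemicontinuousOn.exists_isMaxOn univ_nonempty isCompact_univ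
        ((hF.comp (Continuous.prodMk_right x)).upperSemicontinuousOn univ)
      exact ⟨(x, y), (mem_Ici.1 hx).trans (iSup_le fun z => hy (mem_univ z)), rfl⟩
    · rintro ⟨⟨x, y⟩, hy, rfl⟩
      exact (mem_Ici.1 hy).trans (le_iSup (fun y => F (x, y)) y)
  rw [hpreimage]
  exact isClosedMap_fst_of_compactSpace _ (hF.isClosed_preimage a)

section Legendre

variable {Y : Type*} [TopologicalSpace Y] [MeasurableSpace Y] {C : ProbabilityMeasure Y → EReal}

/-- The Legendre transform of a cost `C` on `P(Y)`, as a functional on `C(Y)`. Both sides of the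
duality defining a transfer are of this form: `TopC 𝒯 g x` is `legendre (𝒯 (diracP x)) g` by
definition. -/
def legendre (C : ProbabilityMeasure Y → EReal) (g : C(Y, ℝ)) : EReal :=
  ⨆ σ : ProbabilityMeasure Y, ((∫ y, g y ∂(σ : Measure Y) : ℝ) : EReal) - C σ

theorem legendre_ne_bot {σ : ProbabilityMeasure Y} (hσ : C σ ≠ ⊤) (g : C(Y, ℝ)) :
    legendre C g ≠ ⊥ := by
  refine ne_bot_of_le_ne_bot ?_ (le_iSup (fun σ : ProbabilityMeasure Y =>
    ((∫ y, g y ∂(σ : Measure Y) : ℝ) : EReal) - C σ) σ)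
  simpa [sub_eq_add_neg, EReal.add_eq_bot_iff] using hσ

theorem one_div_mul_legendre_smul (C : ProbabilityMeasure Y → EReal) (g : C(Y, ℝ)) {l : ℝ}
    (hl : 0 < l) :
    ((1 / l : ℝ) : EReal) * legendre C (l • g) =
      legendre (fun σ => ((1 / l : ℝ) : EReal) * C σ) g := by
  have hl' : 0 < 1 / l := one_div_pos.2 hl
  simp only [legendre, coe_mul_iSup_of_pos hl']
  refine iSup_congr fun σ => ?_
  rw [EReal.mul_sub_of_nonneg_of_ne_top (EReal.coe_nonneg.2 hl'.le) (EReal.coe_ne_top _),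
    ← EReal.coe_mul]
  simp only [ContinuousMap.coe_smul, Pi.smul_apply, smul_eq_mul, integral_const_mul, one_div,
    inv_mul_cancel_left₀ hl.ne']

theorem monotoneOn_one_div_mul_legendre_smul (hC : ∀ σ, 0 ≤ C σ) (g : C(Y, ℝ)) :
    MonotoneOn (fun l : ℝ => ((1 / l : ℝ) : EReal) * legendre C (l • g)) (Ioi 0) := by
  intro l hl m hm hlm
  simp only [one_div_mul_legendre_smul C g hl, one_div_mul_legendre_smul C g hm]
  exact iSup_mono fun σ => monotoneOn_coe_sub_one_div_mul _ (hC σ) hl hm hlm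

theorem iSup_one_div_mul_legendre_smul (hC : ∀ σ, 0 ≤ C σ) (g : C(Y, ℝ)) :
    ⨆ l : {l : ℝ // 0 < l}, ((1 / (l : ℝ) : ℝ) : EReal) * legendre C ((l : ℝ) • g) =
      ⨆ σ ∈ {σ : ProbabilityMeasure Y | C σ ≠ ⊤},
        ((∫ y, g y ∂(σ : Measure Y) : ℝ) : EReal) := by
  rw [iSup_congr fun l : {l : ℝ // 0 < l} => one_div_mul_legendre_smul C g l.2]
  simp only [legendre]
  rw [iSup_comm]
  exact iSup_congr fun σ => iSup_coe_sub_one_div_mul _ (hC σ)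

end Legendre

section Transfer

variable {X Y : Type*} [MeasurableSpace X] [TopologicalSpace Y] [MeasurableSpace Y]
  {𝒯 : ProbabilityMeasure X → ProbabilityMeasure Y → EReal}

/-- The effective domain `D(𝒯)` of a transfer functional. -/
def effDomain (𝒯 : ProbabilityMeasure X → ProbabilityMeasure Y → EReal) :
    Set (ProbabilityMeasure X × ProbabilityMeasure Y) :=
  {p | 𝒯 p.1 p.2 ≠ ⊤}

/-- The transfer set of an operator `R` on `C(Y)`: the pairs `(μ, ν)` such that `ν` is dominated by
the functional `g ↦ ∫ R g dμ`. The set `D(𝒯_r)` of the paper is `transferSet (Trec 𝒯)`. -/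
def transferSet (R : C(Y, ℝ) → X → EReal) : Set (ProbabilityMeasure X × ProbabilityMeasure Y) :=
  {p | ∀ g : C(Y, ℝ), ((∫ y, g y ∂(p.2 : Measure Y) : ℝ) : EReal) ≤ eint (p.1 : Measure X) (R g)}

theorem transferSet_mono {R R' : C(Y, ℝ) → X → EReal} (h : R ≤ R') :
    transferSet R ⊆ transferSet R' :=
  fun _ hp g => (hp g).trans (eint_mono (h g))

theorem houseOp_mono {S S' : Set (ProbabilityMeasure X × ProbabilityMeasure Y)} (h : S ⊆ S') :
    houseOp S ≤ houseOp S' :=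
  fun _ _ => biSup_mono fun _ hσ => h hσ

theorem Trec_eq_houseOp_effDomain (hpos : ∀ μ ν, 0 ≤ 𝒯 μ ν) :
    Trec 𝒯 = houseOp (effDomain 𝒯) :=
  funext₂ fun g x => iSup_one_div_mul_legendre_smul (hpos (diracP x)) g

theorem upperSemicontinuous_TopC [TopologicalSpace X] [OpensMeasurableSpace X] [T2Space Y]
    [CompactSpace Y] [BorelSpace Y]
    (hlsc : LowerSemicontinuous fun p : ProbabilityMeasure X × ProbabilityMeasure Y => 𝒯 p.1 p.2)
    (g : C(Y, ℝ)) : UpperSemicontinuous (TopC 𝒯 g) := by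
  refine upperSemicontinuous_iSup_of_compactSpace (α := X) (β := ProbabilityMeasure Y)
    (F := fun p => ((∫ y, g y ∂(p.2 : Measure Y) : ℝ) : EReal) - 𝒯 (diracP p.1) p.2) ?_
  have hdirac : Continuous fun p : X × ProbabilityMeasure Y => (diracP p.1, p.2) :=
    (continuous_diracProba.comp continuous_fst).prodMk continuous_snd
  have hint : Continuous fun p : X × ProbabilityMeasure Y =>
      ((∫ y, g y ∂(p.2 : Measure Y) : ℝ) : EReal) :=
    continuous_coe_real_ereal.comp
      ((ProbabilityMeasure.continuous_integral_continuousMap g).comp continuous_snd)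
  have hneg : UpperSemicontinuous fun p : X × ProbabilityMeasure Y => -𝒯 (diracP p.1) p.2 :=
    continuous_neg.comp_lowerSemicontinuous_antitone (hlsc.comp hdirac)
      fun _ _ h => EReal.neg_le_neg_iff.2 h
  exact hint.upperSemicontinuous.add' hneg fun _ => EReal.continuousAt_add (by simp) (by simp)

theorem iSup_integral_eq_eint_Trec (hmeas : ∀ g, Measurable (TopC 𝒯 g)) (hpos : ∀ μ ν, 0 ≤ 𝒯 μ ν)
    {μ : ProbabilityMeasure X} (hdual : ∀ g, legendre (𝒯 μ) g = eint (μ : Measure X) (TopC 𝒯 g))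
    (hμ : ∃ ν₀, 𝒯 μ ν₀ ≠ ⊤) (g : C(Y, ℝ)) :
    ⨆ ν ∈ {ν : ProbabilityMeasure Y | 𝒯 μ ν ≠ ⊤}, ((∫ y, g y ∂(ν : Measure Y) : ℝ) : EReal) =
      eint (μ : Measure X) (Trec 𝒯 g) := by
  obtain ⟨ν₀, hν₀⟩ := hμ
  have : (atTop : Filter {l : ℝ // 0 < l}).IsCountablyGenerated :=
    inferInstanceAs (atTop : Filter (Ioi (0 : ℝ))).IsCountablyGenerated
  have hmono : Monotone fun (l : {l : ℝ // 0 < l}) (x : X) =>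
      ((1 / (l : ℝ) : ℝ) : EReal) * TopC 𝒯 ((l : ℝ) • g) x :=
    fun l m hlm x => monotoneOn_one_div_mul_legendre_smul (hpos (diracP x)) g l.2 m.2 hlm
  have hbot : eint (μ : Measure X) (fun x => ((1 / (1 : ℝ) : ℝ) : EReal) *
      TopC 𝒯 ((1 : ℝ) • g) x) ≠ ⊥ := by
    simpa [← hdual] using legendre_ne_bot hν₀ g
  calc
    _ = ⨆ l : {l : ℝ // 0 < l}, ((1 / (l : ℝ) : ℝ) : EReal) * legendre (𝒯 μ) ((l : ℝ) • g) :=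
      (iSup_one_div_mul_legendre_smul (hpos μ) g).symm
    _ = ⨆ l : {l : ℝ // 0 < l}, eint (μ : Measure X) fun x =>
        ((1 / (l : ℝ) : ℝ) : EReal) * TopC 𝒯 ((l : ℝ) • g) x :=
      iSup_congr fun l => by rw [hdual, eint_const_mul (one_div_pos.2 l.2).le]
    _ = eint (μ : Measure X) (Trec 𝒯 g) :=
      (eint_iSup (fun l => ((hmeas _).const_mul _).aemeasurable) hmono
        ⟨⟨1, one_pos⟩, hbot⟩).symm

theorem effDomain_subset_transferSet {R : C(Y, ℝ) → X → EReal}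
    (h : ∀ μ : ProbabilityMeasure X, (∃ ν₀, 𝒯 μ ν₀ ≠ ⊤) → ∀ g : C(Y, ℝ),
      ⨆ ν ∈ {ν : ProbabilityMeasure Y | 𝒯 μ ν ≠ ⊤}, ((∫ y, g y ∂(ν : Measure Y) : ℝ) : EReal) =
        eint (μ : Measure X) (R g)) :
    effDomain 𝒯 ⊆ transferSet R :=
  fun p hp g => (le_iSup₂_of_le p.2 hp le_rfl).trans_eq (h p.1 ⟨p.2, hp⟩ g)

theorem transferSet_Trec_subset (hpos : ∀ μ ν, 0 ≤ 𝒯 μ ν)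
    {S : Set (ProbabilityMeasure X × ProbabilityMeasure Y)} (hdom : effDomain 𝒯 ⊆ S)
    (hS : transferSet (houseOp S) ⊆ S) : transferSet (Trec 𝒯) ⊆ S := by
  rw [Trec_eq_houseOp_effDomain hpos]
  exact (transferSet_mono (houseOp_mono hdom)).trans hS

end Transfer

theorem recession_smallest_transfer_set_general
    {X Y : Type*} [TopologicalSpace X] [MeasurableSpace X] [OpensMeasurableSpace X]
    [TopologicalSpace Y] [T2Space Y] [CompactSpace Y] [MeasurableSpace Y] [BorelSpace Y]
    (𝒯 : ProbabilityMeasure X → ProbabilityMeasure Y → EReal)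
    (hlsc : LowerSemicontinuous fun p : ProbabilityMeasure X × ProbabilityMeasure Y => 𝒯 p.1 p.2)
    (hdual : ∀ μ g, legendre (𝒯 μ) g = eint (μ : Measure X) (TopC 𝒯 g))
    (hpos : ∀ μ ν, 0 ≤ 𝒯 μ ν) :
    (∀ (g : C(Y, ℝ)) (x : X), MonotoneOn
        (fun l : ℝ => ((1 / l : ℝ) : EReal) * TopC 𝒯 (l • g) x) (Ioi 0)) ∧
    (∀ μ : ProbabilityMeasure X, (∃ ν₀, 𝒯 μ ν₀ ≠ ⊤) → ∀ g : C(Y, ℝ),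
        ⨆ ν ∈ {ν : ProbabilityMeasure Y | 𝒯 μ ν ≠ ⊤}, ((∫ y, g y ∂(ν : Measure Y) : ℝ) : EReal) =
          eint (μ : Measure X) (Trec 𝒯 g)) ∧
    effDomain 𝒯 ⊆ transferSet (Trec 𝒯) ∧
    ∀ S : Set (ProbabilityMeasure X × ProbabilityMeasure Y),
      effDomain 𝒯 ⊆ S → transferSet (houseOp S) ⊆ S → transferSet (Trec 𝒯) ⊆ S := by
  have hformula := fun μ hμ => iSup_integral_eq_eint_Trec
    (fun g => (upperSemicontinuous_TopC hlsc g).measurable) hpos (hdual μ) hμ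
  exact ⟨fun g x => monotoneOn_one_div_mul_legendre_smul (hpos (diracP x)) g, hformula,
    effDomain_subset_transferSet hformula, fun _ => transferSet_Trec_subset hpos⟩

/-- The domain of a standard nonnegative backward linear transfer is contained in
the transfer set associated with the recession operator `T_r`, which is the
smallest backward transfer set containing it. -/
theorem recession_smallest_transfer_set
    {X Y : Type*} [MetricSpace X] [CompactSpace X] [MeasurableSpace X] [BorelSpace X]
    [MetricSpace Y] [CompactSpace Y] [MeasurableSpace Y] [BorelSpace Y]
    (𝒯 : ProbabilityMeasure X → ProbabilityMeasure Y → EReal)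
    (h𝒯 : IsBLT 𝒯) (hstd : IsStandardT 𝒯) (hpos : ∀ μ ν, 0 ≤ 𝒯 μ ν) :
    (∀ (g : C(Y, ℝ)) (x : X), MonotoneOn
        (fun l : ℝ => (((1 / l) : ℝ) : EReal) * TopC 𝒯 (l • g) x) (Ioi (0 : ℝ))) ∧
    (∀ μ : ProbabilityMeasure X, (∃ ν₀, 𝒯 μ ν₀ ≠ ⊤) → ∀ g : C(Y, ℝ),
        (⨆ ν ∈ {ν : ProbabilityMeasure Y | 𝒯 μ ν ≠ ⊤},
          (((∫ y, g y ∂(ν : Measure Y)) : ℝ) : EReal))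
          = eint (μ : Measure X) (Trec 𝒯 g)) ∧
    ({p : ProbabilityMeasure X × ProbabilityMeasure Y | 𝒯 p.1 p.2 ≠ ⊤}
        ⊆ {p | ∀ g : C(Y, ℝ), (((∫ y, g y ∂(p.2 : Measure Y)) : ℝ) : EReal)
            ≤ eint (p.1 : Measure X) (Trec 𝒯 g)}) ∧
    (∀ S : Set (ProbabilityMeasure X × ProbabilityMeasure Y),
        PConvex S → IsCompact S → IsGamblingHouse S →
        {p : ProbabilityMeasure X × ProbabilityMeasure Y | 𝒯 p.1 p.2 ≠ ⊤} ⊆ S →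
        S = {p | ∀ g : C(Y, ℝ), (((∫ y, g y ∂(p.2 : Measure Y)) : ℝ) : EReal)
            ≤ eint (p.1 : Measure X) (houseOp S g)} →
        {p : ProbabilityMeasure X × ProbabilityMeasure Y |
            ∀ g : C(Y, ℝ), (((∫ y, g y ∂(p.2 : Measure Y)) : ℝ) : EReal)
              ≤ eint (p.1 : Measure X) (Trec 𝒯 g)} ⊆ S) := by
  obtain ⟨-, -, -, -, hlsc, hdual⟩ := h𝒯
  obtain ⟨hmono, hformula, hdom, hleast⟩ :=
    recession_smallest_transfer_set_general 𝒯 hlsc hdual hpos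
  exact ⟨hmono, hformula, hdom, fun S _ _ _ hS heq => hleast S hS heq.superset⟩
end
end
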